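/- arXiv:1006.3872 — 2 statements merged into one kernel-verified Lean document; each statement's English description precedes it below -/
import Mathlib

section
/- Every k^G-Galois object is isomorphic as a G-algebra to Ind_S^G(B), where S is a subgroup of G and B is a k^S-Galois object that is a simple algebra. -/
/-!
Let `I` be a maximal two-sided ideal of `A` (one exists, since `A` is nonzero and finite
dimensional), let `S` be its stabilizer in `G`, and let `B = A ⧸ I`, a simple algebra on which `S`
acts. The map `toInd : A → Ind_S^G(B)`, `a ↦ (g ↦ [g • a])`, is a morphism of `G`-algebras.

It is injective (`toInd_injective`) because its kernel is a proper `G`-invariant ideal. It is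
surjective (`toInd_surjective`) by the Chinese remainder theorem: `I` is comaximal with each of its
other conjugates, so there is a separator `e` with `e ≡ 1` modulo `I` and `g • e ∈ I` for all
`g ∉ S` (`exists_separator`); sums of translates of multiples of `e` realize all families of
residues indexed by the right cosets of `S` (`exists_prescribed_residues`).

The Galois properties descend to `B`: the isomorphism of `A` with `[G : S]` copies of `B` gives
`dim B = |S|`; an `S`-invariant left ideal of `B` induces a `G`-invariant left ideal of `A`; and an
`S`-invariant element of `B` gives a constant, hence `G`-invariant, function in `Ind_S^G(B)`.
-/

set_option synthInstance.maxHeartbeats 1000000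
set_option maxHeartbeats 1000000

variable (k : Type*) [Field k] (G : Type*) [Group G]

section Ind
variable (S : Subgroup G) (B : Type*) [Ring B] [Algebra k B]
  [MulSemiringAction S B] [SMulCommClass S k B]

/-- The induced algebra `Ind_S^G(B) = A_S(G,B) = {r : G → B | r(s g) = s • r(g)}`,
as a subalgebra of the function algebra `G → B`. -/
def indAlg : Subalgebra k (G → B) where
  carrier := {r | ∀ (s : S) (g : G), r (s * g) = s • r g}
  mul_mem' := by
    intro p q hp hq s g
    simp only [Pi.mul_apply, hp s g, hq s g, smul_mul']
  add_mem' := by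
    intro p q hp hq s g
    simp only [Pi.add_apply, hp s g, hq s g, smul_add]
  one_mem' := by intro s g; simp
  zero_mem' := by intro s g; simp
  algebraMap_mem' := by
    intro c s g
    simpa using (smul_algebraMap (A := B) (R := k) s c).symm

namespace indAlg

variable {G S B}

/-- The `G`-action on the induced algebra: `(g • r)(x) = r (x * g)`. -/
instance : MulSemiringAction G (indAlg k G S B) where
  smul g r := ⟨fun x => (r : G → B) (x * g), fun s x => by
    simpa [mul_assoc] using r.2 s (x * g)⟩
  one_smul r := by
    apply Subtype.ext; funext x
    show (r : G → B) (x * 1) = (r : G → B) x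
    rw [mul_one]
  mul_smul g h r := by
    apply Subtype.ext; funext x
    show (r : G → B) (x * (g * h)) = (r : G → B) (x * g * h)
    rw [mul_assoc]
  smul_zero g := rfl
  smul_add g r r' := rfl
  smul_one g := rfl
  smul_mul g r r' := rfl

@[simp] theorem smul_apply (g : G) (r : indAlg k G S B) (x : G) :
    ((g • r : indAlg k G S B) : G → B) x = (r : G → B) (x * g) := rfl

instance : SMulCommClass G k (indAlg k G S B) :=
  ⟨fun g c r => by apply Subtype.ext; funext x; show c • (r : G → B) (x * g) = _ ; rfl⟩

end indAlg
end Ind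

variable (k : Type*) [Field k] (G : Type*) [Group G]

section GAlg
variable (A : Type*) [Ring A] [Algebra k A] [MulSemiringAction G A] [SMulCommClass G k A]

/-- `A` has no nontrivial `G`-invariant left ideals. -/
def NoInvariantLeftIdeals : Prop :=
  ∀ J : Submodule A A, (∀ (g : G), ∀ a ∈ J, g • a ∈ J) → J = ⊥ ∨ J = ⊤

/-- The subalgebra of `G`-invariants of `A` is reduced to the scalars `k`. -/
def InvariantsTrivial : Prop :=
  ∀ a : A, (∀ g : G, g • a = a) → ∃ c : k, a = algebraMap k A c

/-- The characterization of `k^G`-Galois objects used throughout the paper: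
`dim_k A = |G|`, no nontrivial `G`-invariant left ideals, and `A^G = k`. -/
def IsGaloisObjectTriple [Fintype G] : Prop :=
  Module.finrank k A = Fintype.card G ∧ NoInvariantLeftIdeals G A ∧ InvariantsTrivial k G A

end GAlg

section Can
open TensorProduct
variable [Fintype G]
variable (A : Type*) [Ring A] [Algebra k A] [MulSemiringAction G A] [SMulCommClass G k A]

/-- The canonical (Galois) map `A ⊗ A → A ⊗ k^G ≅ (G → A)`,
`a ⊗ b ↦ (g ↦ a * (g • b))`, i.e. `a ⊗ b ↦ a b₍₀₎ ⊗ b₍₁₎` for the coaction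
`ρ(b) = ∑ g, (g • b) ⊗ t_g`. -/
noncomputable def canMap : A ⊗[k] A →ₗ[k] (G → A) :=
  TensorProduct.lift
    (LinearMap.mk₂ k (fun a b => fun g => a * (g • b))
      (fun a a' b => by funext g; simp [add_mul])
      (fun c a b => by funext g; simp [smul_mul_assoc])
      (fun a b b' => by funext g; simp [smul_add, mul_add])
      (fun c a b => by funext g; show a * g • (c • b) = c • (a * g • b); rw [smul_comm g c b, mul_smul_comm]))

/-- A `k^G`-Galois object: coinvariants equal `k` and the canonical map is bijective. -/
def IsGaloisObject : Prop :=
  InvariantsTrivial k G A ∧ Function.Bijective (canMap k G A)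

end Can

universe u

/-- A bundled `S`-algebra over `k` (an algebra with an action of `S` by
`k`-algebra automorphisms). -/
structure BundledGAlgebra (k : Type*) [Field k] (S : Type*) [Group S] where
  carrier : Type u
  [ring : Ring carrier]
  [alg : Algebra k carrier]
  [act : MulSemiringAction S carrier]
  [comm : SMulCommClass S k carrier]

attribute [instance] BundledGAlgebra.ring BundledGAlgebra.alg BundledGAlgebra.act
  BundledGAlgebra.comm

/-! ### Maximal two-sided ideals and their stabilizers -/

section Stabilizer

variable {G : Type*} [Group G] [Finite G] {A : Type*} [Ring A] [MulSemiringAction G A]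

/-- The stabilizer of a two-sided ideal `I`, encoded by the one-sided condition `g • I ⊆ I`.
Since `G` is finite, `g⁻¹` is a power of `g`, so this condition is closed under inverses. -/
def idealStabilizer (G : Type*) [Group G] [Finite G] {A : Type*} [Ring A]
    [MulSemiringAction G A] (I : TwoSidedIdeal A) : Subgroup G where
  carrier := {g | ∀ x ∈ I, g • x ∈ I}
  mul_mem' := fun {g h} hg hh x hx => by
    rw [mul_smul]
    exact hg _ (hh x hx)
  one_mem' := fun x hx => by rwa [one_smul]
  inv_mem' := fun {g} hg x hx => by
    have hpow : ∀ (n : ℕ), ∀ x ∈ I, g ^ n • x ∈ I := fun n => by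
      induction n with
      | zero => intro x hx; simp [hx]
      | succ n ih => intro x hx; rw [pow_succ, mul_smul]; exact ih _ (hg x hx)
    obtain ⟨n, hn⟩ : ∃ n : ℕ, g ^ n = g⁻¹ :=
      ⟨orderOf g - 1, eq_inv_of_mul_eq_one_left (by
        rw [← pow_succ, Nat.sub_add_cancel (orderOf_pos g), pow_orderOf_eq_one])⟩
    rw [← hn]
    exact hpow n x hx

theorem mem_idealStabilizer {I : TwoSidedIdeal A} {g : G} :
    g ∈ idealStabilizer G I ↔ ∀ x ∈ I, g • x ∈ I := Iff.rfl

/-- A maximal two-sided ideal `I` is comaximal with its conjugate `g⁻¹ • I` if `g` does not fix `I`;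
the element `f` witnesses this. -/
theorem exists_separator_one {I : TwoSidedIdeal A} (hI : IsCoatom I) {g : G}
    (hg : g ∉ idealStabilizer G I) : ∃ f : A, f - 1 ∈ I ∧ g • f ∈ I := by
  set Ig : TwoSidedIdeal A := I.comap (MulSemiringAction.toRingHom G A g) with hIg
  have hmem : ∀ x, x ∈ Ig ↔ g • x ∈ I := fun x => by
    rw [hIg, TwoSidedIdeal.mem_comap]; rfl
  rcases hI.le_iff.1 (le_sup_left : I ≤ I ⊔ Ig) with h | h
  · have h1 : (1 : A) ∈ I ⊔ Ig := by rw [h]; trivial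
    obtain ⟨y, hy, z, hz, hyz⟩ := TwoSidedIdeal.mem_sup.1 h1
    refine ⟨z, ?_, (hmem z).1 hz⟩
    have : z - 1 = -y := by rw [← hyz]; abel
    rw [this]
    exact I.neg_mem hy
  · refine absurd ?_ hg
    rw [← inv_mem_iff, mem_idealStabilizer]
    intro x hx
    have : g⁻¹ • x ∈ I ⊔ Ig := TwoSidedIdeal.mem_sup_right ((hmem _).2 (by rwa [smul_inv_smul]))
    rwa [h] at this

/-- The noncommutative Chinese remainder step: an element that is `1` modulo `I` and lies in all
the conjugates of `I` different from `I`. -/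
theorem exists_separator {I : TwoSidedIdeal A} (hI : IsCoatom I) :
    ∃ e : A, e - 1 ∈ I ∧ ∀ g : G, g ∉ idealStabilizer G I → g • e ∈ I := by
  classical
  have := Fintype.ofFinite G
  suffices h : ∀ T : Finset G, ∃ e : A, e - 1 ∈ I ∧
      ∀ g ∈ T, g ∉ idealStabilizer G I → g • e ∈ I by
    obtain ⟨e, he, h⟩ := h Finset.univ
    exact ⟨e, he, fun g => h g (Finset.mem_univ g)⟩
  intro T
  induction T using Finset.induction_on with
  | empty => exact ⟨1, by simp [I.zero_mem], by simp⟩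
  | insert g T _ ih =>
    obtain ⟨e, he, heT⟩ := ih
    by_cases hg : g ∈ idealStabilizer G I
    · refine ⟨e, he, fun g' hg' hn => ?_⟩
      rcases Finset.mem_insert.1 hg' with rfl | h
      · exact absurd hg hn
      · exact heT g' h hn
    · obtain ⟨f, hf, hgf⟩ := exists_separator_one hI hg
      refine ⟨e * f, ?_, fun g' hg' hn => ?_⟩
      · have : e * f - 1 = e * (f - 1) + (e - 1) := by rw [mul_sub, mul_one]; abel
        rw [this]
        exact I.add_mem (I.mul_mem_left _ _ hf) he
      · rw [smul_mul']
        rcases Finset.mem_insert.1 hg' with rfl | h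
        · exact I.mul_mem_left _ _ hgf
        · exact I.mul_mem_right _ _ (heT g' h hn)

/-- The stabilizer of `I` acts on the quotient `A ⧸ I`. -/
@[reducible] def quotientAction (I : TwoSidedIdeal A) :
    MulSemiringAction (idealStabilizer G I) (A ⧸ I.asIdeal) where
  smul s := Ideal.Quotient.lift I.asIdeal
    ((Ideal.Quotient.mk I.asIdeal).comp (MulSemiringAction.toRingHom G A (s : G)))
    (fun a ha => Ideal.Quotient.eq_zero_iff_mem.2 (s.2 a ha))
  one_smul b := by
    obtain ⟨a, rfl⟩ := Ideal.Quotient.mk_surjective b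
    exact congrArg (Ideal.Quotient.mk I.asIdeal) (one_smul G a)
  mul_smul s t b := by
    obtain ⟨a, rfl⟩ := Ideal.Quotient.mk_surjective b
    exact congrArg (Ideal.Quotient.mk I.asIdeal) (mul_smul (s : G) (t : G) a)
  smul_zero s := map_zero (Ideal.Quotient.lift I.asIdeal _ _)
  smul_add s := map_add (Ideal.Quotient.lift I.asIdeal _ _)
  smul_one s := map_one (Ideal.Quotient.lift I.asIdeal _ _)
  smul_mul s := map_mul (Ideal.Quotient.lift I.asIdeal _ _)

/-- The quotient of a ring by a maximal two-sided ideal is simple. -/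
theorem isSimpleRing_quotient {A : Type*} [Ring A] {I : TwoSidedIdeal A} (hI : IsCoatom I) :
    IsSimpleRing (A ⧸ I.asIdeal) := by
  have : Nontrivial (A ⧸ I.asIdeal) := Ideal.Quotient.nontrivial_iff.2 fun h => hI.1 <| by
    ext x
    rw [← TwoSidedIdeal.mem_asIdeal, h]
    exact iff_of_true trivial trivial
  refine .of_eq_bot_or_eq_top fun J => ?_
  have hle : I ≤ J.comap (Ideal.Quotient.mk I.asIdeal) := fun x hx => by
    rw [TwoSidedIdeal.mem_comap, Ideal.Quotient.eq_zero_iff_mem.2 hx]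
    exact J.zero_mem
  rcases hI.le_iff.1 hle with h | h
  · right
    rw [← TwoSidedIdeal.one_mem_iff, ← map_one (Ideal.Quotient.mk I.asIdeal),
      ← TwoSidedIdeal.mem_comap, h]
    trivial
  · left
    refine le_antisymm (fun b hb => ?_) bot_le
    obtain ⟨a, rfl⟩ := Ideal.Quotient.mk_surjective b
    rw [TwoSidedIdeal.mem_bot, Ideal.Quotient.eq_zero_iff_mem]
    have : a ∈ J.comap (Ideal.Quotient.mk I.asIdeal) := (TwoSidedIdeal.mem_comap _).2 hb
    rwa [h] at this

theorem exists_isCoatom_twoSidedIdeal (A : Type*) [Ring A] [Nontrivial A] [IsNoetherianRing A] :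
    ∃ I : TwoSidedIdeal A, IsCoatom I := by
  have hmono : StrictMono (TwoSidedIdeal.asIdeal : TwoSidedIdeal A → Ideal A) :=
    TwoSidedIdeal.asIdeal.monotone.strictMono_of_injective fun I J h => by
      ext x
      rw [← TwoSidedIdeal.mem_asIdeal, h, TwoSidedIdeal.mem_asIdeal]
  have : WellFoundedGT (TwoSidedIdeal A) := hmono.wellFoundedGT
  obtain h | ⟨I, hI, -⟩ := eq_top_or_exists_le_coatom (⊥ : TwoSidedIdeal A)
  · exact absurd h bot_ne_top
  · exact ⟨I, hI⟩

end Stabilizer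

/-! ### The canonical map to the induced algebra -/

section Quotient

variable {k : Type*} [Field k] {G : Type*} [Group G] [Fintype G]
  {A : Type u} [Ring A] [Algebra k A] [MulSemiringAction G A] [SMulCommClass G k A]

/-- The quotient `A ⧸ I` with its induced action of the stabilizer of `I`. -/
def quotientGAlgebra (k : Type*) [Field k] (G : Type*) [Group G] [Fintype G]
    {A : Type u} [Ring A] [Algebra k A] [MulSemiringAction G A] [SMulCommClass G k A]
    (I : TwoSidedIdeal A) : BundledGAlgebra.{u} k (idealStabilizer G I) where
  carrier := A ⧸ I.asIdeal
  act := quotientAction I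
  comm := by
    let := quotientAction (G := G) I
    refine ⟨fun s c b => ?_⟩
    obtain ⟨a, rfl⟩ := Ideal.Quotient.mk_surjective b
    exact congrArg (Ideal.Quotient.mk I.asIdeal) (smul_comm (s : G) c a)

/-- The projection from `A` onto the quotient algebra. -/
def toQuotient (k : Type*) [Field k] (G : Type*) [Group G] [Fintype G]
    {A : Type u} [Ring A] [Algebra k A] [MulSemiringAction G A] [SMulCommClass G k A]
    (I : TwoSidedIdeal A) : A →ₐ[k] (quotientGAlgebra k G I).carrier :=
  Ideal.Quotient.mkₐ k I.asIdeal

theorem toQuotient_surjective (I : TwoSidedIdeal A) :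
    Function.Surjective (toQuotient k G I) := Ideal.Quotient.mk_surjective

theorem toQuotient_eq_zero {I : TwoSidedIdeal A} {a : A} : toQuotient k G I a = 0 ↔ a ∈ I :=
  Ideal.Quotient.eq_zero_iff_mem

theorem toQuotient_smul {I : TwoSidedIdeal A} (s : idealStabilizer G I) (a : A) :
    toQuotient k G I ((s : G) • a) = s • toQuotient k G I a := rfl

/-- The canonical `G`-algebra map `A → Ind_S^G(A ⧸ I)`, `a ↦ (g ↦ [g • a])`. -/
def toInd (k : Type*) [Field k] (G : Type*) [Group G] [Fintype G]
    {A : Type u} [Ring A] [Algebra k A] [MulSemiringAction G A] [SMulCommClass G k A]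
    (I : TwoSidedIdeal A) :
    A →ₐ[k] indAlg k G (idealStabilizer G I) (quotientGAlgebra k G I).carrier where
  toFun a := ⟨fun g => toQuotient k G I (g • a), fun s g => by
    show toQuotient k G I (((s : G) * g) • a) = s • toQuotient k G I (g • a)
    rw [mul_smul, toQuotient_smul]⟩
  map_one' := by
    apply Subtype.ext; funext g
    exact (congrArg (toQuotient k G I) (smul_one g)).trans (map_one (toQuotient k G I))
  map_mul' a b := by
    apply Subtype.ext; funext g
    exact (congrArg (toQuotient k G I) (smul_mul' g a b)).trans (map_mul (toQuotient k G I) _ _)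
  map_zero' := by
    apply Subtype.ext; funext g
    exact (congrArg (toQuotient k G I) (smul_zero g)).trans (map_zero (toQuotient k G I))
  map_add' a b := by
    apply Subtype.ext; funext g
    exact (congrArg (toQuotient k G I) (smul_add g a b)).trans (map_add (toQuotient k G I) _ _)
  commutes' c := by
    apply Subtype.ext; funext g
    exact (congrArg (toQuotient k G I) (smul_algebraMap g c)).trans ((toQuotient k G I).commutes c)

theorem toInd_apply (I : TwoSidedIdeal A) (a : A) (g : G) :
    (toInd k G I a : G → (quotientGAlgebra k G I).carrier) g = toQuotient k G I (g • a) := rfl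

theorem toInd_smul (I : TwoSidedIdeal A) (g : G) (a : A) :
    toInd k G I (g • a) = g • toInd k G I a := by
  apply Subtype.ext; funext x
  rw [indAlg.smul_apply, toInd_apply, toInd_apply, mul_smul]

/-- The kernel of `toInd` is the intersection of the conjugates of `I`, a proper `G`-invariant
ideal. -/
theorem toInd_injective (hA : NoInvariantLeftIdeals G A) {I : TwoSidedIdeal A} (hI : I ≠ ⊤) :
    Function.Injective (toInd k G I) := by
  rcases hA (RingHom.ker (toInd k G I)) (fun g a ha => by
    rw [RingHom.mem_ker] at ha ⊢
    rw [toInd_smul, ha, smul_zero]) with h | h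
  · exact (RingHom.injective_iff_ker_eq_bot _).2 h
  · refine absurd ((TwoSidedIdeal.one_mem_iff I).1 ?_) hI
    have h1 : toInd k G I 1 = 0 := by
      rw [← RingHom.mem_ker, h]; trivial
    rw [← toQuotient_eq_zero (k := k) (G := G), ← one_smul G (1 : A), ← toInd_apply, h1]
    rfl

/-- The right cosets of a subgroup; `Quotient.out` is used as a choice of representatives. -/
abbrev RightCosets {G : Type*} [Group G] (S : Subgroup G) : Type _ :=
  Quotient (QuotientGroup.rightRel S)

theorem mul_inv_out_mem {G : Type*} [Group G] {S : Subgroup G} (g : G) :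
    g * (Quotient.mk (QuotientGroup.rightRel S) g).out⁻¹ ∈ S :=
  QuotientGroup.rightRel_apply.1 (Quotient.mk_out (s := QuotientGroup.rightRel S) g)

theorem eq_of_out_mul_inv_out_mem {G : Type*} [Group G] {S : Subgroup G} {p q : RightCosets S}
    (h : q.out * p.out⁻¹ ∈ S) : p = q := by
  rw [← Quotient.out_eq p, ← Quotient.out_eq q]
  exact Quotient.sound (QuotientGroup.rightRel_apply.2 h)

/-- Chinese remainder theorem for the conjugates of `I`: residues can be prescribed at one
representative of each right coset of the stabilizer. -/
theorem exists_prescribed_residues {I : TwoSidedIdeal A} (hI : IsCoatom I)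
    (f : RightCosets (idealStabilizer G I) → (quotientGAlgebra k G I).carrier) :
    ∃ a : A, ∀ q, toQuotient k G I (q.out • a) = f q := by
  classical
  obtain ⟨e, he, hge⟩ := exists_separator (G := G) hI
  have he1 : toQuotient k G I e = 1 := by
    rw [← sub_eq_zero, ← map_one (toQuotient k G I), ← map_sub, toQuotient_eq_zero]
    exact he
  choose b hb using fun q => toQuotient_surjective (k := k) (G := G) I (f q)
  have := Fintype.ofFinite (RightCosets (idealStabilizer G I))
  refine ⟨∑ p : RightCosets (idealStabilizer G I), p.out⁻¹ • (b p * e), fun q => ?_⟩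
  rw [Finset.smul_sum, map_sum, Finset.sum_eq_single q]
  · rw [smul_inv_smul, map_mul, he1, mul_one, hb]
  · intro p _ hpq
    rw [← mul_smul, smul_mul', toQuotient_eq_zero]
    exact I.mul_mem_left _ _ (hge _ fun h => hpq (eq_of_out_mul_inv_out_mem h))
  · exact fun h => absurd (Finset.mem_univ q) h

/-- An equivariant function on `G` is determined by its values at coset representatives. -/
theorem indAlg_ext_out {k : Type*} [Field k] {G : Type*} [Group G] {S : Subgroup G} {B : Type*}
    [Ring B] [Algebra k B] [MulSemiringAction S B] [SMulCommClass S k B] {r t : indAlg k G S B}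
    (h : ∀ q : RightCosets S, (r : G → B) q.out = (t : G → B) q.out) : r = t := by
  apply Subtype.ext; funext g
  set q : RightCosets S := Quotient.mk _ g with hq
  have hg : g = ((⟨g * q.out⁻¹, mul_inv_out_mem g⟩ : S) : G) * q.out := by simp
  rw [hg, r.2, t.2, h]

theorem toInd_surjective {I : TwoSidedIdeal A} (hI : IsCoatom I) :
    Function.Surjective (toInd k G I) := fun r => by
  obtain ⟨a, ha⟩ := exists_prescribed_residues hI
    fun q => (r : G → (quotientGAlgebra k G I).carrier) q.out
  exact ⟨a, indAlg_ext_out ha⟩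

/-! ### Descent of the Galois properties to the simple quotient -/

/-- `A` is linearly isomorphic to a product of copies of `A ⧸ I` indexed by the right cosets of
the stabilizer, whence the dimension of `A ⧸ I`. -/
theorem finrank_quotient (hA : IsGaloisObjectTriple k G A) {I : TwoSidedIdeal A}
    (hI : IsCoatom I) [Fintype (idealStabilizer G I)] :
    Module.finrank k (quotientGAlgebra k G I).carrier = Fintype.card (idealStabilizer G I) := by
  classical
  have := Fintype.ofFinite (RightCosets (idealStabilizer G I))
  let F : A →ₗ[k] (RightCosets (idealStabilizer G I) → (quotientGAlgebra k G I).carrier) :=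
    LinearMap.pi fun q => (LinearMap.proj q.out).comp
      ((indAlg k G (idealStabilizer G I) (quotientGAlgebra k G I).carrier).val.toLinearMap.comp
        (toInd k G I).toLinearMap)
  have hF : Function.Bijective F := by
    refine ⟨fun a b h => toInd_injective hA.2.1 hI.1 (k := k) (indAlg_ext_out fun q => ?_),
      fun f => ?_⟩
    · exact congrFun h q
    · obtain ⟨a, ha⟩ := exists_prescribed_residues hI f
      exact ⟨a, funext ha⟩
  have : FiniteDimensional k A :=
    Module.finite_of_finrank_pos (by rw [hA.1]; exact Fintype.card_pos)
  have : FiniteDimensional k (quotientGAlgebra k G I).carrier :=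
    Module.Finite.of_surjective (toQuotient k G I).toLinearMap (toQuotient_surjective I)
  have h1 := (LinearEquiv.ofBijective F hF).finrank_eq
  rw [Module.finrank_pi_fintype, Finset.sum_const, Finset.card_univ, smul_eq_mul, hA.1,
    Fintype.card_congr (QuotientGroup.quotientRightRelEquivQuotientLeftRel _),
    ← Nat.card_eq_fintype_card, ← Nat.card_eq_fintype_card,
    Subgroup.card_eq_card_quotient_mul_card_subgroup (idealStabilizer G I)] at h1
  rw [← Nat.card_eq_fintype_card]
  exact (Nat.eq_of_mul_eq_mul_left Nat.card_pos h1).symm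

/-- A stabilizer-invariant left ideal `J` of `A ⧸ I` induces the `G`-invariant left ideal
`{a | ∀ g, [g • a] ∈ J}` of `A`. -/
theorem noInvariantLeftIdeals_quotient (hA : NoInvariantLeftIdeals G A) {I : TwoSidedIdeal A}
    (hI : IsCoatom I) :
    NoInvariantLeftIdeals (idealStabilizer G I) (quotientGAlgebra k G I).carrier := by
  intro J hJ
  let J' : Submodule A A :=
    { carrier := {a | ∀ g : G, toQuotient k G I (g • a) ∈ J}
      add_mem' := fun {a b} ha hb g => by
        rw [smul_add, map_add]
        exact J.add_mem (ha g) (hb g)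
      zero_mem' := fun g => by
        rw [smul_zero, map_zero]
        exact J.zero_mem
      smul_mem' := fun c a ha g => by
        rw [smul_eq_mul, smul_mul', map_mul]
        exact J.smul_mem _ (ha g) }
  rcases hA J' (fun g a ha x => by rw [← mul_smul]; exact ha (x * g)) with h | h
  · left
    rw [eq_bot_iff]
    intro b hb
    obtain ⟨a, rfl⟩ := toQuotient_surjective I b
    obtain ⟨e, he, hge⟩ := exists_separator (G := G) hI
    have he1 : toQuotient k G I e = 1 := by
      rw [← sub_eq_zero, ← map_one (toQuotient k G I), ← map_sub, toQuotient_eq_zero]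
      exact he
    have hae : toQuotient k G I (a * e) = toQuotient k G I a := by
      rw [map_mul, he1, mul_one]
    -- Multiplying the lift `a` by the separator kills its residues off the stabilizer.
    have hmem : a * e ∈ J' := fun g => by
      by_cases hg : g ∈ idealStabilizer G I
      · have := hJ ⟨g, hg⟩ _ hb
        rwa [← hae, ← toQuotient_smul] at this
      · have h0 : toQuotient k G I (g • (a * e)) = 0 := by
          rw [smul_mul', toQuotient_eq_zero]
          exact I.mul_mem_left _ _ (hge g hg)
        rw [h0]
        exact J.zero_mem
    rw [h, Submodule.mem_bot] at hmem
    rw [Submodule.mem_bot, ← hae, hmem, map_zero]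
  · right
    rw [eq_top_iff]
    intro b _
    obtain ⟨a, rfl⟩ := toQuotient_surjective I b
    have ha : a ∈ J' := by rw [h]; trivial
    simpa using ha 1

/-- A stabilizer-invariant element of `A ⧸ I` is the value of a constant function in the induced
algebra, which comes from a `G`-invariant element of `A`. -/
theorem invariantsTrivial_quotient (hA : IsGaloisObjectTriple k G A) {I : TwoSidedIdeal A}
    (hI : IsCoatom I) :
    InvariantsTrivial k (idealStabilizer G I) (quotientGAlgebra k G I).carrier := by
  intro b hb
  obtain ⟨a, ha⟩ := toInd_surjective (k := k) (G := G) hI ⟨fun _ => b, fun s _ => (hb s).symm⟩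
  obtain ⟨c, hc⟩ := hA.2.2 a fun g => toInd_injective hA.2.1 hI.1 (k := k) <| by
    rw [toInd_smul, ha]
    rfl
  refine ⟨c, ?_⟩
  have h1 : toQuotient k G I ((1 : G) • a) = b := by rw [← toInd_apply, ha]
  rw [← h1, one_smul, hc, AlgHom.commutes]

end Quotient

/-- every `k^G`-Galois object is isomorphic as a `G`-algebra to `Ind_S^G(B)`
for some subgroup `S ≤ G` and some simple `k^S`-Galois object `B`. -/
theorem galois_object_is_induced_from_simple
    (k : Type*) [Field k] (G : Type*) [Group G] [Fintype G]
    (A : Type u) [Ring A] [Algebra k A] [MulSemiringAction G A] [SMulCommClass G k A]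
    (hA : IsGaloisObjectTriple k G A) :
    ∃ (S : Subgroup G) (_ : Fintype S) (B : BundledGAlgebra.{u} k S),
      IsGaloisObjectTriple k S B.carrier ∧ IsSimpleRing B.carrier ∧
      ∃ φ : A ≃ₐ[k] indAlg k G S B.carrier, ∀ (g : G) (a : A), φ (g • a) = g • φ a := by
  classical
  have : FiniteDimensional k A :=
    Module.finite_of_finrank_pos (by rw [hA.1]; exact Fintype.card_pos)
  have : Nontrivial A :=
    Module.nontrivial_of_finrank_pos (R := k) (by rw [hA.1]; exact Fintype.card_pos)
  have : IsNoetherianRing A := isNoetherian_of_tower k inferInstance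
  obtain ⟨I, hI⟩ := exists_isCoatom_twoSidedIdeal A
  let := Fintype.ofFinite (idealStabilizer G I)
  refine ⟨idealStabilizer G I, inferInstance, quotientGAlgebra k G I,
    ⟨finrank_quotient hA hI, noInvariantLeftIdeals_quotient hA.2.1 hI,
      invariantsTrivial_quotient hA hI⟩, isSimpleRing_quotient hI, ?_⟩
  exact ⟨AlgEquiv.ofBijective (toInd k G I)
    ⟨toInd_injective hA.2.1 hI.1, toInd_surjective hI⟩, toInd_smul I⟩
end

section
/- Let A be a k^G-Galois object which is a central simple algebra over K = Z(A), and let N = {x ∈ G : x·α = α for all α ∈ K}. Then for x ∈ G the following are equivalent: (i) x ∈ N; (ii) A_x ≠ 0; (iii) A_g A_x = A_{gx} for all g ∈ G; (iv) A_x A_{x^{-1}} = A_{x^{-1}} A_x = K; (v) A_x contains an invertible element of A. -/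
/-!
Only `(i) → (ii)` uses more than elementary manipulations: it is the Skolem–Noether theorem for
the automorphism `x • ·`, which is `K`-linear exactly when `x ∈ N`.

Let `e` be a `K`-basis of `A`. The Artin–Whaples argument (`eq_zero_of_sum_mul_mul_eq_zero`) shows
that the map `Aⁿ → End_K(A)` sending `a` to `b ↦ ∑ i, a i * b * e i` is injective, hence bijective
because both sides have `K`-dimension `n²`. Write the automorphism `φ` as `b ↦ ∑ i, a i * b * e i`.
Multiplicativity of `φ` gives `∑ i, (a i * c - φ c * a i) * b * e i = 0` for all `b`, so
`a i * c = φ c * a i` for each `i`, and some `a i` is nonzero since `φ 1 ≠ 0`.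

For `(ii) → (v)`: if `a ∈ A_x` is nonzero, then `a * A = A * a` is a two-sided ideal, hence all
of `A`, so `a` is a unit. A unit `u ∈ A_x` has `u⁻¹ ∈ A_{x⁻¹}`, and multiplication by `u` or `u⁻¹`
moves between components, which gives `(iii)` and `(iv)`. A unit of `A_x` commutes with the
center, which forces `x` to act trivially there.
-/


variable (k : Type*) [Field k] (G : Type*) [Group G]

section Grading
variable (k : Type*) [Field k] (G : Type*) [Group G]
variable (A : Type*) [Ring A] [Algebra k A] [MulSemiringAction G A] [SMulCommClass G k A]

/-- The homogeneous component `A_g = {a ∈ A | a b = (g • b) a for all b}` of the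
`G`-grading of a `k^G`-Galois object given by the Miyashita–Ulbrich action. -/
def muComponent (g : G) : Submodule k A where
  carrier := {a | ∀ b : A, a * b = (g • b) * a}
  add_mem' := fun {a a'} ha ha' b => by rw [add_mul, ha b, ha' b, mul_add]
  zero_mem' := fun b => by rw [zero_mul, mul_zero]
  smul_mem' := fun c a ha b => by
    rw [smul_mul_assoc, ha b, mul_smul_comm]

end Grading

/-! ### Skolem–Noether for central simple algebras -/

section SkolemNoether

variable {K A : Type*} [Field K] [Ring A] [Algebra K A] [IsSimpleRing A] [Algebra.IsCentral K A]

/-- The Artin–Whaples lemma: over a central simple algebra, the operators of right multiplication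
by `K`-linearly independent elements are left `A`-linearly independent. -/
lemma eq_zero_of_sum_mul_mul_eq_zero {ι : Type*} {e : ι → A} (he : LinearIndependent K e)
    (s : Finset ι) (a : ι → A) (h : ∀ b, ∑ i ∈ s, a i * b * e i = 0) :
    ∀ i ∈ s, a i = 0 := by
  classical
  induction s using Finset.induction_on generalizing a with
  | empty => simp
  | insert j s hj ih =>
    suffices haj : a j = 0 by
      have h2 := ih a (fun b => by simpa [Finset.sum_insert hj, haj] using h b)
      intro i hi
      rcases Finset.mem_insert.1 hi with rfl | hi
      exacts [haj, h2 i hi]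
    by_contra haj
    -- The `j`-th coefficients of all relations form a two-sided ideal, which is nonzero.
    let I : TwoSidedIdeal A := .mk'
      {c | ∃ a' : ι → A, a' j = c ∧ ∀ b, ∑ i ∈ insert j s, a' i * b * e i = 0}
      ⟨0, rfl, by simp⟩
      (by
        rintro _ _ ⟨a₁, rfl, h₁⟩ ⟨a₂, rfl, h₂⟩
        refine ⟨a₁ + a₂, rfl, fun b => ?_⟩
        simp only [Pi.add_apply, add_mul, Finset.sum_add_distrib, h₁, h₂, add_zero])
      (by
        rintro _ ⟨a₁, rfl, h₁⟩
        refine ⟨-a₁, rfl, fun b => ?_⟩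
        simp only [Pi.neg_apply, neg_mul, Finset.sum_neg_distrib, h₁, neg_zero])
      (by
        rintro c _ ⟨a₁, rfl, h₁⟩
        refine ⟨fun i => c * a₁ i, rfl, fun b => ?_⟩
        simpa only [Finset.mul_sum, mul_assoc, mul_zero] using congrArg (c * ·) (h₁ b))
      (by
        rintro _ c ⟨a₁, rfl, h₁⟩
        refine ⟨fun i => a₁ i * c, rfl, fun b => ?_⟩
        simpa only [mul_assoc] using h₁ (c * b))
    have h1 : (1 : A) ∈ I := IsSimpleRing.one_mem_of_ne_zero_mem I haj (by
      rw [TwoSidedIdeal.mem_mk']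
      exact ⟨a, rfl, h⟩)
    rw [TwoSidedIdeal.mem_mk'] at h1
    obtain ⟨a', h1, hrel⟩ := h1
    -- Commutators with the normalized relation are shorter relations, so its coefficients are
    -- central.
    have hc : ∀ i ∈ s, ∀ c, a' i * c = c * a' i := fun i hi c => by
      have := ih (fun i => a' i * c - c * a' i) (fun b => by
        have e1 := hrel (c * b)
        have e2 := congrArg (c * ·) (hrel b)
        rw [Finset.sum_insert hj, h1] at e1
        simp only [Finset.sum_insert hj, h1, mul_add, mul_zero, Finset.mul_sum] at e2
        simp only [sub_mul, Finset.sum_sub_distrib]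
        rw [sub_eq_zero]
        have := e1.trans e2.symm
        simpa only [one_mul, mul_assoc, add_right_inj] using this) i hi
      exact sub_eq_zero.1 this
    have hz : ∀ i ∈ insert j s, ∃ z : K, algebraMap K A z = a' i := fun i hi => by
      rcases Finset.mem_insert.1 hi with rfl | hi
      · exact ⟨1, by rw [h1, map_one]⟩
      · have : a' i ∈ Subalgebra.center K A :=
          Subalgebra.mem_center_iff.2 fun c => (hc i hi c).symm
        rw [Algebra.IsCentral.center_eq_bot] at this
        exact Algebra.mem_bot.1 this
    choose! z hz using hz
    have hzero := linearIndependent_iff'.1 he (insert j s) z (by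
      rw [← hrel 1]
      refine Finset.sum_congr rfl fun i hi => ?_
      rw [← hz i hi, mul_one, Algebra.smul_def]) j (Finset.mem_insert_self j s)
    have := hz j (Finset.mem_insert_self j s)
    rw [hzero, h1, map_zero] at this
    exact zero_ne_one this

/-- The nonzero form of Skolem–Noether: an endomorphism of a finite-dimensional central simple
algebra is intertwined with the identity by a nonzero element. -/
lemma exists_ne_zero_mul_eq_map_mul [FiniteDimensional K A] (φ : A →ₐ[K] A) :
    ∃ a : A, a ≠ 0 ∧ ∀ b, a * b = φ b * a := by
  let e := Module.finBasis K A
  let Ψ : (Fin (Module.finrank K A) → A) →ₗ[K] Module.End K A :=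
    { toFun := fun a => ∑ i, LinearMap.mulLeftRight K (a i, e i)
      map_add' := fun a a' => by
        ext b
        simp [add_mul, Finset.sum_add_distrib]
      map_smul' := fun c a => by
        ext b
        simp [Finset.smul_sum] }
  have hΨ (a b) : Ψ a b = ∑ i, a i * b * e i := by simp [Ψ]
  have hinj : Function.Injective Ψ := by
    rw [injective_iff_map_eq_zero]
    intro a ha
    funext i
    exact eq_zero_of_sum_mul_mul_eq_zero e.linearIndependent Finset.univ a
      (fun b => by rw [← hΨ, ha, LinearMap.zero_apply]) i (Finset.mem_univ i)
  have hsurj : Function.Surjective Ψ :=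
    (LinearMap.injective_iff_surjective_of_finrank_eq_finrank (by
      simp [Module.finrank_linearMap, Module.finrank_pi_fintype])).1 hinj
  obtain ⟨a, ha⟩ := hsurj φ.toLinearMap
  have hφ (b) : φ b = ∑ i, a i * b * e i := by
    rw [← hΨ, ha, AlgHom.toLinearMap_apply]
  have hmem (i c) : a i * c = φ c * a i := by
    refine sub_eq_zero.1 (eq_zero_of_sum_mul_mul_eq_zero e.linearIndependent Finset.univ
      (fun i => a i * c - φ c * a i) (fun b => ?_) i (Finset.mem_univ i))
    have h1 := hφ (c * b)
    rw [map_mul, hφ b, Finset.mul_sum] at h1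
    simp only [sub_mul, Finset.sum_sub_distrib, mul_assoc] at h1 ⊢
    rw [h1, sub_self]
  by_contra! hne
  have ha0 (i) : a i = 0 := by
    by_contra h
    obtain ⟨b, hb⟩ := hne _ h
    exact hb (hmem i b)
  have := hφ 1
  simp [ha0] at this

end SkolemNoether

/-! ### Homogeneous components and their units -/

section Components

variable {k : Type*} [Field k] {G : Type*} [Group G]
  {A : Type*} [Ring A] [Algebra k A] [MulSemiringAction G A]

lemma mem_muComponent {g : G} {a : A} :
    a ∈ muComponent k G A g ↔ ∀ b : A, a * b = (g • b) * a := Iff.rfl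

lemma mul_mem_muComponent {g h : G} {a b : A} (ha : a ∈ muComponent k G A g)
    (hb : b ∈ muComponent k G A h) : a * b ∈ muComponent k G A (g * h) := fun c => by
  rw [mul_assoc, hb c, ← mul_assoc, ha, mul_assoc, mul_smul]

lemma mem_muComponent_one {a : A} :
    a ∈ muComponent k G A (1 : G) ↔ a ∈ Subalgebra.center k A := by
  simp only [mem_muComponent, one_smul, Subalgebra.mem_center_iff, eq_comm]

lemma inv_mem_muComponent {x : G} {u : Aˣ} (hu : (u : A) ∈ muComponent k G A x) :
    (↑u⁻¹ : A) ∈ muComponent k G A x⁻¹ := fun b => by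
  rw [Units.inv_mul_eq_iff_eq_mul, ← mul_assoc, hu, smul_inv_smul, mul_assoc, Units.mul_inv,
    mul_one]

lemma span_mul_muComponent_of_unit {x : G} {u : Aˣ} (hu : (u : A) ∈ muComponent k G A x) (g : G) :
    Submodule.span k {c : A | ∃ a ∈ muComponent k G A g,
      ∃ b ∈ muComponent k G A x, c = a * b} = muComponent k G A (g * x) := by
  apply le_antisymm
  · rw [Submodule.span_le]
    rintro _ ⟨a, ha, b, hb, rfl⟩
    exact mul_mem_muComponent ha hb
  · intro c hc
    refine Submodule.subset_span ⟨c * ↑u⁻¹, ?_, u, hu, by simp⟩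
    simpa using mul_mem_muComponent hc (inv_mem_muComponent hu)

/-- In a simple algebra a nonzero `a ∈ A_x` is a unit: `a * A = A * a` is a two-sided ideal. -/
lemma isUnit_of_mem_muComponent [IsSimpleRing A] {x : G} {a : A}
    (ha : a ∈ muComponent k G A x) (h0 : a ≠ 0) : IsUnit a := by
  let I : TwoSidedIdeal A := .mk' {c | ∃ b, c = a * b}
    ⟨0, by simp⟩
    (by
      rintro _ _ ⟨b, rfl⟩ ⟨b', rfl⟩
      exact ⟨b + b', (mul_add ..).symm⟩)
    (by
      rintro _ ⟨b, rfl⟩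
      exact ⟨-b, by simp⟩)
    (by
      rintro c _ ⟨b, rfl⟩
      refine ⟨(x⁻¹ • c) * b, ?_⟩
      rw [← mul_assoc, ← mul_assoc, ha, smul_inv_smul])
    (by
      rintro _ c ⟨b, rfl⟩
      exact ⟨b * c, by rw [mul_assoc]⟩)
  have h1 : (1 : A) ∈ I := IsSimpleRing.one_mem_of_ne_zero_mem I h0 (by
    rw [TwoSidedIdeal.mem_mk']
    exact ⟨1, (mul_one a).symm⟩)
  rw [TwoSidedIdeal.mem_mk'] at h1
  obtain ⟨b, hb⟩ := h1
  have hl : (x • b) * a = 1 := by rw [← ha, hb]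
  exact isUnit_iff_exists.2 ⟨b, hb.symm, by rw [← left_inv_eq_right_inv hl hb.symm, hl]⟩

end Components

/-- for a `k^G`-Galois object `A` which is (central) simple with center
`K = Z(A)` and `N = {x ∈ G | x • α = α for all α ∈ K}`, the following are equivalent
for `x ∈ G`: (i) `x ∈ N`; (ii) `A_x ≠ 0`; (iii) `A_g A_x = A_{g x}` for all `g`;
(iv) `A_x A_{x⁻¹} = A_{x⁻¹} A_x = K`; (v) `A_x` contains a unit. -/
theorem muComponent_tfae
    (k : Type*) [Field k] (G : Type*) [Group G] [Fintype G]
    (A : Type*) [Ring A] [Algebra k A] [MulSemiringAction G A] [SMulCommClass G k A]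
    (hA : IsGaloisObjectTriple k G A) (hsimple : IsSimpleRing A)
    (x : G) :
    [ -- (i) x ∈ N
      (∀ z ∈ Set.center A, x • z = z),
      -- (ii) A_x ≠ 0
      muComponent k G A x ≠ ⊥,
      -- (iii) A_g A_x = A_{gx} for all g
      (∀ g : G, Submodule.span k {c : A | ∃ a ∈ muComponent k G A g,
          ∃ b ∈ muComponent k G A x, c = a * b} = muComponent k G A (g * x)),
      -- (iv) A_x A_{x⁻¹} = A_{x⁻¹} A_x = K
      (Submodule.span k {c : A | ∃ a ∈ muComponent k G A x,
          ∃ b ∈ muComponent k G A x⁻¹, c = a * b} =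
            (Subalgebra.center k A).toSubmodule ∧
       Submodule.span k {c : A | ∃ a ∈ muComponent k G A x⁻¹,
          ∃ b ∈ muComponent k G A x, c = a * b} =
            (Subalgebra.center k A).toSubmodule),
      -- (v) A_x contains an invertible element
      (∃ a ∈ muComponent k G A x, IsUnit a) ].TFAE := by
  obtain ⟨hdim, -, -⟩ := hA
  have exists_unit : (∃ a ∈ muComponent k G A x, IsUnit a) →
      ∃ u : Aˣ, (u : A) ∈ muComponent k G A x := by
    rintro ⟨_, ha, u, rfl⟩
    exact ⟨u, ha⟩
  have hone : (1 : A) ≠ 0 := one_ne_zero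
  tfae_have 1 → 2 := by
    intro hx
    have : FiniteDimensional k A := Module.finite_of_finrank_pos (hdim ▸ Fintype.card_pos)
    -- `A` is regarded as an algebra over the field `K = Z(A)`.
    have hF : IsField (Subalgebra.center k A) := IsSimpleRing.isField_center A
    let : Field (Subalgebra.center k A) := Field.ofIsUnitOrEqZero fun z =>
      or_iff_not_imp_right.2 fun hz => IsUnit.of_mul_eq_one _ (hF.mul_inv_cancel hz).choose_spec
    let : Algebra (Subalgebra.center k A) A :=
      { algebraMap := (Subalgebra.center k A).val.toRingHom
        commutes' := fun z a => (Subalgebra.mem_center_iff.1 z.2 a).symm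
        smul_def' := fun _ _ => rfl }
    have : FiniteDimensional (Subalgebra.center k A) A :=
      Module.Finite.of_restrictScalars_finite k _ A
    have : Algebra.IsCentral (Subalgebra.center k A) A := ⟨fun z hz => Algebra.mem_bot.2
      ⟨⟨z, Subalgebra.mem_center_iff.2 (Subalgebra.mem_center_iff.1 hz)⟩, rfl⟩⟩
    let φ : A →ₐ[Subalgebra.center k A] A :=
      { MulSemiringAction.toRingHom G A x with
        commutes' := fun z => hx z z.2 }
    obtain ⟨a, ha0, ha⟩ := exists_ne_zero_mul_eq_map_mul φ
    exact (Submodule.ne_bot_iff _).2 ⟨a, ha, ha0⟩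
  tfae_have 2 → 5 := by
    intro h
    obtain ⟨a, ha, h0⟩ := (Submodule.ne_bot_iff _).1 h
    exact ⟨a, ha, isUnit_of_mem_muComponent ha h0⟩
  tfae_have 5 → 1 := by
    intro h z hz
    obtain ⟨u, hu⟩ := exists_unit h
    have h1 : (u : A) * z = z * u := (hz.comm u).symm
    exact (u.isUnit.mul_right_cancel (h1.symm.trans (hu z))).symm
  tfae_have 5 → 3 := by
    intro h
    obtain ⟨u, hu⟩ := exists_unit h
    exact span_mul_muComponent_of_unit hu
  tfae_have 3 → 2 := by
    -- If `A_x = 0`, then `A_{x⁻¹} A_x = A_1 = K` would be zero.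
    intro h hbot
    have h1 : (1 : A) ∈ muComponent k G A (x⁻¹ * x) := by
      rw [inv_mul_cancel, mem_muComponent_one]
      exact one_mem _
    rw [← h, hbot] at h1
    have : Submodule.span k {c : A | ∃ a ∈ muComponent k G A x⁻¹,
        ∃ b ∈ (⊥ : Submodule k A), c = a * b} ≤ ⊥ := by
      rw [Submodule.span_le]
      rintro _ ⟨a, -, b, hb, rfl⟩
      rw [Submodule.mem_bot] at hb
      simp [hb]
    exact hone (by simpa using this h1)
  tfae_have 5 → 4 := by
    intro h
    obtain ⟨u, hu⟩ := exists_unit h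
    have hK : muComponent k G A (1 : G) = (Subalgebra.center k A).toSubmodule :=
      Submodule.ext fun _ => mem_muComponent_one
    rw [span_mul_muComponent_of_unit (inv_mem_muComponent hu), span_mul_muComponent_of_unit hu,
      mul_inv_cancel, inv_mul_cancel]
    exact ⟨hK, hK⟩
  tfae_have 4 → 2 := by
    rintro ⟨h, -⟩ hbot
    have h1 : (1 : A) ∈ (Subalgebra.center k A).toSubmodule :=
      one_mem (Subalgebra.center k A)
    rw [← h, hbot] at h1
    have : Submodule.span k {c : A | ∃ a ∈ (⊥ : Submodule k A),
        ∃ b ∈ muComponent k G A x⁻¹, c = a * b} ≤ ⊥ := by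
      rw [Submodule.span_le]
      rintro _ ⟨a, ha, b, -, rfl⟩
      rw [Submodule.mem_bot] at ha
      simp [ha]
    exact hone (by simpa using this h1)
  tfae_finish
end
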